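/- arXiv:1406.5583 — 4 statements merged into one kernel-verified Lean document; each statement's English description precedes it below -/
import Mathlib

section
/- Let f(p) = Σ_{m=0}^∞ pᵐ aₘ be an entire power series with quaternionic coefficients satisfying Σ_{m=0}^∞ m! |aₘ|² < ∞. Then for every imaginary unit I ∈ 𝕊 and every n ∈ ℕ, ⟨f, pⁿ⟩_I = n!\, aₙ. Consequently, if ⟨f, pⁿ⟩_I = 0 for all n ∈ ℕ then f is identically zero; i.e., the monomials pⁿ form an orthogonal basis of the slice hyperholomorphic quaternionic Fock space. -/
open MeasureTheory Real Nat

noncomputable section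

local notation "ℍ" => Quaternion ℝ

/-- The sphere of quaternionic imaginary units. -/
def quatSphere : Set ℍ := {q | q.re = 0 ∧ ‖q‖ = 1}

/-- The point `x + y I` of the slice `ℂ_I`. -/
def sliceVal (I : ℍ) (z : ℝ × ℝ) : ℍ := ((z.1 : ℍ)) + ((z.2 : ℍ)) * I

/-- The Fock inner product `⟨f, g⟩_I = (1/π) ∫ e^{-(x²+y²)} conj(g(x+yI)) f(x+yI) dx dy`. -/
def fockInner (I : ℍ) (f g : ℍ → ℍ) : ℍ :=
  π⁻¹ • ∫ z : ℝ × ℝ,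
    Real.exp (-(z.1 ^ 2 + z.2 ^ 2)) • (star (g (sliceVal I z)) * f (sliceVal I z))

lemma fk_integrable (b : ℝ) (hb : 0 < b) (n : ℕ) :
    Integrable (fun w : ℂ => ‖w‖ ^ n * Real.exp (-b * ‖w‖ ^ 2)) := by
  have h := Complex.integral_rpow_mul_exp_neg_mul_rpow (p := 2) (q := n) (b := b) (by norm_num)
    (by have : (0:ℝ) ≤ n := Nat.cast_nonneg n
        linarith) hb
  have h2 : Integrable (fun w : ℂ => ‖w‖ ^ (n : ℝ) * Real.exp (-b * ‖w‖ ^ (2 : ℝ))) := by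
    apply Integrable.of_integral_ne_zero
    rw [h]
    have : 0 < Real.Gamma (((n : ℝ) + 2) / 2) := Real.Gamma_pos_of_pos (by positivity)
    positivity
  simpa using h2

lemma fk_diag (n : ℕ) :
    ∫ w : ℂ, Real.exp (-‖w‖ ^ 2) • ((starRingEnd ℂ w) ^ n * w ^ n) = ((π * n ! : ℝ) : ℂ) := by
  have h := Complex.integral_rpow_mul_exp_neg_rpow (p := 2) (q := (2 * n : ℕ)) (by norm_num)
    (by have : (0:ℝ) ≤ (2 * n : ℕ) := Nat.cast_nonneg _
        linarith)
  have e : (((2 * n : ℕ) : ℝ) + 2) / 2 = n + 1 := by push_cast; ring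
  rw [e, Real.Gamma_nat_eq_factorial] at h
  have e2 : 2 * π / 2 * (n ! : ℝ) = π * n ! := by ring
  rw [e2] at h
  rw [← h, ← integral_complex_ofReal]
  congr 1
  ext1 w
  rw [← mul_pow, mul_comm (starRingEnd ℂ w), Complex.mul_conj, Complex.normSq_eq_norm_sq,
    Real.rpow_natCast, pow_mul]
  simp [mul_comm]

lemma fk_off (n m : ℕ) (hnm : m ≠ n) :
    ∫ w : ℂ, Real.exp (-‖w‖ ^ 2) • ((starRingEnd ℂ w) ^ n * w ^ m) = 0 := by
  have hd : ((m : ℝ) - n) ≠ 0 := sub_ne_zero.2 (by exact_mod_cast hnm)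
  set t : ℝ := π / ((m : ℝ) - n) with ht
  set c : Circle := Circle.exp t with hc
  have hcc : (starRingEnd ℂ (c : ℂ)) ^ n * (c : ℂ) ^ m = -1 := by
    have h1 : (c : ℂ) = Complex.exp (t * Complex.I) := by rw [hc, Circle.coe_exp]
    rw [h1, ← Complex.exp_conj, ← Complex.exp_nat_mul, ← Complex.exp_nat_mul, ← Complex.exp_add,
      ← Complex.exp_pi_mul_I]
    congr 1
    have h2 : (t : ℂ) * ((m : ℂ) - n) = π := by
      have : t * ((m : ℝ) - n) = π := by rw [ht]; field_simp
      exact_mod_cast this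
    simp only [map_mul, Complex.conj_ofReal, Complex.conj_I]
    rw [← h2]; ring
  have hr := (MeasurePreserving.integral_comp (rotation c).measurePreserving
    (rotation c).toHomeomorph.measurableEmbedding
    (fun w : ℂ => Real.exp (-‖w‖ ^ 2) • ((starRingEnd ℂ w) ^ n * w ^ m)))
  have h3 : ∀ w : ℂ, Real.exp (-‖rotation c w‖ ^ 2) •
      ((starRingEnd ℂ (rotation c w)) ^ n * (rotation c w) ^ m) =
      -(Real.exp (-‖w‖ ^ 2) • ((starRingEnd ℂ w) ^ n * w ^ m)) := by
    intro w
    rw [LinearIsometryEquiv.norm_map, rotation_apply, map_mul, mul_pow, mul_pow, ← smul_neg]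
    congr 1
    linear_combination ((starRingEnd ℂ w) ^ n * w ^ m) * hcc
  simp only [h3] at hr
  rw [integral_neg] at hr
  exact self_eq_neg.1 hr.symm

lemma fk_sq {I : ℍ} (hI : I ∈ quatSphere) : I * I = -1 := by
  obtain ⟨h0, h1⟩ := hI
  have h := Quaternion.sq_eq_neg_normSq.2 h0
  rw [Quaternion.normSq_eq_norm_mul_self, h1] at h
  rw [← sq, h]; simp

lemma fk_star {I : ℍ} (hI : I ∈ quatSphere) (w : ℂ) :
    star (Complex.liftAux I (fk_sq hI) w) = Complex.liftAux I (fk_sq hI) (starRingEnd ℂ w) := by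
  have hs : star I = -I := Quaternion.star_eq_neg.2 hI.1
  simp [Complex.liftAux_apply, hs, Quaternion.algebraMap_def]

lemma fk_norm {I : ℍ} (hI : I ∈ quatSphere) (w : ℂ) :
    ‖Complex.liftAux I (fk_sq hI) w‖ = ‖w‖ := by
  have h : ((‖Complex.liftAux I (fk_sq hI) w‖ * ‖Complex.liftAux I (fk_sq hI) w‖ : ℝ) : ℍ)
      = ((‖w‖ * ‖w‖ : ℝ) : ℍ) := by
    rw [← Quaternion.normSq_eq_norm_mul_self, ← Quaternion.self_mul_star, fk_star hI, ← map_mul,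
      Complex.mul_conj, Complex.normSq_eq_norm_sq, Complex.liftAux_apply]
    simp [sq]
  have h' := Quaternion.coe_injective h
  exact (mul_self_inj (norm_nonneg _) (norm_nonneg _)).1 h'

lemma fk_cont {I : ℍ} (hI : I ∈ quatSphere) : Continuous (Complex.liftAux I (fk_sq hI)) :=
  (Complex.liftAux I (fk_sq hI)).toLinearMap.continuous_of_finiteDimensional

lemma fk_inner_eq {I : ℍ} (hI : I ∈ quatSphere) (f g : ℍ → ℍ) :
    fockInner I f g = π⁻¹ • ∫ w : ℂ, Real.exp (-‖w‖ ^ 2) •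
      (star (g (Complex.liftAux I (fk_sq hI) w)) * f (Complex.liftAux I (fk_sq hI) w)) := by
  unfold fockInner
  rw [← Complex.volume_preserving_equiv_real_prod.integral_comp']
  congr 2
  ext1 w
  have h1 : sliceVal I (Complex.measurableEquivRealProd w) = Complex.liftAux I (fk_sq hI) w := by
    simp [sliceVal, Complex.liftAux_apply, Quaternion.coe_mul_eq_smul,
      Quaternion.algebraMap_def]
  rw [h1]
  congr 3
  simp only [Complex.measurableEquivRealProd_apply]
  rw [← Complex.normSq_eq_norm_sq, Complex.normSq_apply]
  ring

lemma fk_term {I : ℍ} (hI : I ∈ quatSphere) (n m : ℕ) (c : ℍ) :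
    ∫ w : ℂ, Real.exp (-‖w‖ ^ 2) •
      (star (Complex.liftAux I (fk_sq hI) w ^ n) * (Complex.liftAux I (fk_sq hI) w ^ m * c))
      = if m = n then ((π * n ! : ℝ) : ℍ) * c else 0 := by
  let L : ℂ →L[ℝ] ℍ := ⟨(LinearMap.mulRight ℝ c).comp
    (Complex.liftAux I (fk_sq hI)).toLinearMap, LinearMap.continuous_of_finiteDimensional _⟩
  have hL : ∀ w, L w = Complex.liftAux I (fk_sq hI) w * c := fun w => rfl
  have e : ∀ w : ℂ, Real.exp (-‖w‖ ^ 2) •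
      (star (Complex.liftAux I (fk_sq hI) w ^ n) * (Complex.liftAux I (fk_sq hI) w ^ m * c))
      = L (Real.exp (-‖w‖ ^ 2) • ((starRingEnd ℂ w) ^ n * w ^ m)) := by
    intro w
    rw [map_smul, hL, map_mul, map_pow, map_pow, star_pow, fk_star hI, mul_assoc]
  simp only [e]
  rw [L.integral_comp_comm]
  · split_ifs with h
    · subst h
      rw [fk_diag, hL, Complex.liftAux_apply]
      simp [Quaternion.algebraMap_def]
    · rw [fk_off n m h, map_zero]
  · refine (fk_integrable 1 one_pos (n + m)).mono' (by fun_prop) (.of_forall fun w => ?_)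
    rw [norm_smul, norm_mul, norm_pow, norm_pow, RCLike.norm_conj, ← pow_add, mul_comm]
    simp

set_option maxHeartbeats 1000000 in
lemma fk_main (f : ℍ → ℍ) (a : ℕ → ℍ)
    (hf : ∀ p : ℍ, HasSum (fun m : ℕ => p ^ m * a m) (f p))
    (ha : Summable fun m : ℕ => (m ! : ℝ) * ‖a m‖ ^ 2)
    (I : ℍ) (hI : I ∈ quatSphere) (n : ℕ) :
    fockInner I f (fun p => p ^ n) = ((n ! : ℝ) : ℍ) * a n := by
  rw [fk_inner_eq hI]
  have hc := fk_cont hI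
  set ψ := Complex.liftAux I (fk_sq hI) with hψ
  let bound : ℕ → ℂ → ℝ := fun m w => (‖w‖ ^ n * Real.exp (-‖w‖ ^ 2)) *
    (1 / 2 * (Real.exp (‖w‖ ^ 2 / 2) * ((m ! : ℝ) * ‖a m‖ ^ 2) +
      Real.exp (-(‖w‖ ^ 2 / 2)) * ((‖w‖ ^ 2) ^ m / m !)))
  have hb : ∀ w, HasSum (fun m => bound m w)
      ((∑' m : ℕ, (m ! : ℝ) * ‖a m‖ ^ 2) * (1 / 2) * (‖w‖ ^ n * Real.exp (-(1/2) * ‖w‖ ^ 2)) +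
        1 / 2 * (‖w‖ ^ n * Real.exp (-(1/2) * ‖w‖ ^ 2))) := by
    intro w
    have h1 := ha.hasSum.mul_left (Real.exp (‖w‖ ^ 2 / 2))
    have h2 : HasSum (fun m : ℕ => (‖w‖ ^ 2) ^ m / (m ! : ℝ)) (Real.exp (‖w‖ ^ 2)) := by
      rw [Real.exp_eq_exp_ℝ]
      exact NormedSpace.expSeries_div_hasSum_exp (‖w‖ ^ 2)
    have h3 := ((h1.add (h2.mul_left (Real.exp (-(‖w‖ ^ 2 / 2))))).mul_left (1 / 2)).mul_left
      (‖w‖ ^ n * Real.exp (-‖w‖ ^ 2))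
    have e1 : Real.exp (-(1/2) * ‖w‖ ^ 2) = Real.exp (-‖w‖ ^ 2) * Real.exp (‖w‖ ^ 2 / 2) := by
      rw [← Real.exp_add]; congr 1; ring
    have e2 : Real.exp (-(‖w‖ ^ 2 / 2)) * Real.exp (‖w‖ ^ 2) = Real.exp (‖w‖ ^ 2 / 2) := by
      rw [← Real.exp_add]; congr 1; ring
    rw [e2] at h3
    have e3 : (∑' m : ℕ, (m ! : ℝ) * ‖a m‖ ^ 2) * (1 / 2) *
        (‖w‖ ^ n * Real.exp (-(1/2) * ‖w‖ ^ 2)) +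
        1 / 2 * (‖w‖ ^ n * Real.exp (-(1/2) * ‖w‖ ^ 2)) = ‖w‖ ^ n * Real.exp (-‖w‖ ^ 2) *
        (1 / 2 * (Real.exp (‖w‖ ^ 2 / 2) * ∑' m : ℕ, (m ! : ℝ) * ‖a m‖ ^ 2 +
          Real.exp (‖w‖ ^ 2 / 2))) := by
      rw [e1]; ring
    rw [e3]
    exact h3
  have key := hasSum_integral_of_dominated_convergence (μ := (volume : Measure ℂ))
    (F := fun m w => Real.exp (-‖w‖ ^ 2) • (star (ψ w ^ n) * (ψ w ^ m * a m)))
    (f := fun w => Real.exp (-‖w‖ ^ 2) • (star (ψ w ^ n) * f (ψ w))) bound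
    (fun m => by
      apply Continuous.aestronglyMeasurable
      fun_prop)
    (fun m => .of_forall fun w => by
      have hn : ‖ψ w‖ = ‖w‖ := fk_norm hI w
      rw [norm_smul, norm_mul, norm_mul, Quaternion.norm_star, norm_pow, norm_pow, hn,
        Real.norm_of_nonneg (Real.exp_pos _).le]
      have hE : Real.exp (‖w‖ ^ 2 / 2) * Real.exp (-(‖w‖ ^ 2 / 2)) = 1 := by
        rw [← Real.exp_add]; simp
      have hE2 : Real.exp (‖w‖ ^ 2 / 2) = Real.exp (‖w‖ ^ 2 / 4) ^ 2 := by
        rw [← Real.exp_nat_mul]; congr 1; push_cast; ring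
      have hE3 : Real.exp (-(‖w‖ ^ 2 / 2)) = Real.exp (-(‖w‖ ^ 2 / 4)) ^ 2 := by
        rw [← Real.exp_nat_mul]; congr 1; push_cast; ring
      have hE4 : Real.exp (‖w‖ ^ 2 / 4) * Real.exp (-(‖w‖ ^ 2 / 4)) = 1 := by
        rw [← Real.exp_add]; simp
      have hs : Real.sqrt (m ! : ℝ) ^ 2 = (m ! : ℝ) := Real.sq_sqrt (by positivity)
      have hs0 : 0 < Real.sqrt (m ! : ℝ) := Real.sqrt_pos.2 (by positivity)
      have am : ‖w‖ ^ m * ‖a m‖ ≤ 1 / 2 * (Real.exp (‖w‖ ^ 2 / 2) * ((m ! : ℝ) * ‖a m‖ ^ 2) +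
          Real.exp (-(‖w‖ ^ 2 / 2)) * ((‖w‖ ^ 2) ^ m / m !)) := by
        have := two_mul_le_add_sq (Real.exp (‖w‖ ^ 2 / 4) * (Real.sqrt (m ! : ℝ) * ‖a m‖))
          (Real.exp (-(‖w‖ ^ 2 / 4)) * (‖w‖ ^ m / Real.sqrt (m ! : ℝ)))
        have e1 : 2 * (Real.exp (‖w‖ ^ 2 / 4) * (Real.sqrt (m ! : ℝ) * ‖a m‖)) *
          (Real.exp (-(‖w‖ ^ 2 / 4)) * (‖w‖ ^ m / Real.sqrt (m ! : ℝ))) =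
            2 * (‖w‖ ^ m * ‖a m‖) := by
          have : Real.sqrt (m ! : ℝ) * (‖w‖ ^ m / Real.sqrt (m ! : ℝ)) = ‖w‖ ^ m := by
            field_simp
          linear_combination (2 * ‖a m‖ * Real.sqrt (m ! : ℝ) * (‖w‖ ^ m / Real.sqrt (m ! : ℝ))) *
            hE4 + 2 * ‖a m‖ * this
        rw [e1, mul_pow, mul_pow, mul_pow, div_pow, hs, ← hE2, ← hE3, pow_right_comm] at this
        linarith
      calc _ = (‖w‖ ^ n * Real.exp (-‖w‖ ^ 2)) * (‖w‖ ^ m * ‖a m‖) := by ring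
        _ ≤ _ := mul_le_mul_of_nonneg_left am (by positivity))
    (.of_forall fun w => (hb w).summable)
    (by
      simp only [fun w => (hb w).tsum_eq]
      have := fk_integrable (1/2) (by norm_num) n
      exact (this.const_mul _).add (this.const_mul _))
    (.of_forall fun w => ((hf (ψ w)).mul_left _).const_smul _)
  have ht : ∀ m, ∫ w : ℂ, Real.exp (-‖w‖ ^ 2) • (star (ψ w ^ n) * (ψ w ^ m * a m)) =
      if m = n then ((π * n ! : ℝ) : ℍ) * a n else 0 := by
    intro m
    refine (fk_term hI n m (a m)).trans ?_
    split_ifs with h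
    · rw [h]
    · rfl
  simp only [ht] at key
  rw [key.unique (hasSum_ite_eq n _) ]
  rw [Quaternion.coe_mul_eq_smul, Quaternion.coe_mul_eq_smul, smul_smul]
  congr 1
  field_simp

theorem fockInner_monomial_eq_coeff (f : ℍ → ℍ) (a : ℕ → ℍ)
    (hf : ∀ p : ℍ, HasSum (fun m : ℕ => p ^ m * a m) (f p))
    (ha : Summable fun m : ℕ => (m ! : ℝ) * ‖a m‖ ^ 2)
    (I : ℍ) (hI : I ∈ quatSphere) :
    (∀ n : ℕ, fockInner I f (fun p => p ^ n) = ((n ! : ℝ) : ℍ) * a n) ∧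
      ((∀ n : ℕ, fockInner I f (fun p => p ^ n) = 0) → ∀ p : ℍ, f p = 0) := by
  have H := fk_main f a hf ha I hI
  refine ⟨H, fun h0 p => ?_⟩
  have hz : ∀ n, a n = 0 := by
    intro n
    have h1 := H n
    rw [h0 n, Quaternion.coe_mul_eq_smul] at h1
    exact (smul_eq_zero.1 h1.symm).resolve_left (by positivity)
  have h2 := hf p
  simp only [hz, mul_zero] at h2
  exact h2.unique hasSum_zero
end
end

section
/- Let f(p) = Σ_{m=0}^∞ pᵐ aₘ be an entire power series with quaternionic coefficients. Then for every imaginary unit I ∈ 𝕊, the equality (1/π) ∫_{ℝ²} e^{−(x²+y²)} |f(x+yI)|² \,dx\,dy = Σ_{m=0}^∞ m! |aₘ|² holds in [0, ∞]. In particular, f belongs to the slice hyperholomorphic quaternionic Fock space 𝔉(ℍ) if and only if Σ_{m=0}^∞ m! |aₘ|² < ∞. -/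
open MeasureTheory Real Nat

noncomputable section

local notation "ℍ" => Quaternion ℝ

/-- The squared Fock norm of `f` on the slice `ℂ_I`, with values in `[0,∞]`. -/
def fockNormSq (I : ℍ) (f : ℍ → ℍ) : ENNReal :=
  ENNReal.ofReal π⁻¹ *
    ∫⁻ z : ℝ × ℝ, ENNReal.ofReal (Real.exp (-(z.1 ^ 2 + z.2 ^ 2)) * ‖f (sliceVal I z)‖ ^ 2)

lemma aux_sq {I : Quaternion ℝ} (hI : I ∈ quatSphere) : I * I = -1 := by
  obtain ⟨h0, h1⟩ := hI
  have h2 : I.re ^ 2 + I.imI ^ 2 + I.imJ ^ 2 + I.imK ^ 2 = 1 := by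
    rw [← Quaternion.normSq_def', Quaternion.normSq_eq_norm_mul_self, h1]; norm_num
  rw [h0] at h2
  ext <;> simp [h0]
  · have h3 : (1 : Quaternion ℝ).re = 1 := rfl
    rw [h3]
    nlinarith
  · have h3 : (1 : Quaternion ℝ).imI = 0 := rfl
    rw [h3]
    ring
  · have h3 : (1 : Quaternion ℝ).imJ = 0 := rfl
    rw [h3]
    ring
  · have h3 : (1 : Quaternion ℝ).imK = 0 := rfl
    rw [h3]
    ring

lemma aux_pow {I : Quaternion ℝ} (hI : I ∈ quatSphere) (r t : ℝ) (m : ℕ) :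
    (sliceVal I (r * cos t, r * sin t)) ^ m
      = (r ^ m * cos (m * t)) • (1 : Quaternion ℝ) + (r ^ m * sin (m * t)) • I := by
  have h : sliceVal I (r * cos t, r * sin t) = (r * cos t) • (1 : Quaternion ℝ) + (r * sin t) • I := by
    unfold sliceVal
    rw [Quaternion.coe_mul_eq_smul, ← mul_one ((((r * cos t, r * sin t) : ℝ × ℝ).1 : ℝ) : Quaternion ℝ),
      Quaternion.coe_mul_eq_smul]
  rw [h]
  induction m with
  | zero => simp
  | succ k ih =>
    rw [pow_succ, ih]
    simp only [add_mul, mul_add, smul_mul_smul_comm, aux_sq hI, one_mul, mul_one]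
    have e : ((k + 1 : ℕ) : ℝ) * t = k * t + t := by push_cast; ring
    rw [e, cos_add, sin_add]
    module

lemma aux_inner_I {I : Quaternion ℝ} (hI : I ∈ quatSphere) (a b : Quaternion ℝ) :
    inner ℝ (I * a) (I * b) = inner ℝ a b ∧ inner ℝ (I * a) b = - inner ℝ a (I * b) := by
  obtain ⟨h0, h1⟩ := hI
  have h2 : I.re ^ 2 + I.imI ^ 2 + I.imJ ^ 2 + I.imK ^ 2 = 1 := by
    rw [← Quaternion.normSq_def', Quaternion.normSq_eq_norm_mul_self, h1]; norm_num
  rw [h0] at h2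
  simp only [Quaternion.inner_def, Quaternion.re_mul, Quaternion.imI_mul, Quaternion.imJ_mul,
    Quaternion.imK_mul, Quaternion.re_star, Quaternion.imI_star, Quaternion.imJ_star,
    Quaternion.imK_star, h0]
  constructor
  · linear_combination (a.re * b.re + a.imI * b.imI + a.imJ * b.imJ + a.imK * b.imK) * h2
  · ring

lemma aux_inner {I : Quaternion ℝ} (hI : I ∈ quatSphere) (a b : Quaternion ℝ) (r t : ℝ) (m n : ℕ) :
    inner ℝ ((sliceVal I (r * cos t, r * sin t)) ^ m * a)
      ((sliceVal I (r * cos t, r * sin t)) ^ n * b)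
      = r ^ (m + n) * (inner ℝ a b * cos (((n : ℤ) - m : ℤ) * t)
        + inner ℝ a (I * b) * sin (((n : ℤ) - m : ℤ) * t)) := by
  obtain ⟨h1, h2⟩ := aux_inner_I hI a b
  rw [aux_pow hI, aux_pow hI]
  simp only [add_mul, smul_mul_assoc, one_mul, inner_add_left, inner_add_right,
    real_inner_smul_left, real_inner_smul_right, h1, h2]
  push_cast
  rw [sub_mul, cos_sub, sin_sub]
  ring

lemma aux_trig (k : ℤ) (hk : k ≠ 0) (c d : ℝ) :
    ∫ t in (-π)..π, (c * cos (k * t) + d * sin (k * t)) = 0 := by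
  have hk' : (k : ℝ) ≠ 0 := by exact_mod_cast hk
  rw [intervalIntegral.integral_add
    (by apply Continuous.intervalIntegrable; fun_prop)
    (by apply Continuous.intervalIntegrable; fun_prop)]
  rw [intervalIntegral.integral_const_mul, intervalIntegral.integral_const_mul,
    intervalIntegral.integral_comp_mul_left (fun x => cos x) hk',
    intervalIntegral.integral_comp_mul_left (fun x => sin x) hk']
  simp [integral_cos, integral_sin, sin_int_mul_pi]

lemma aux_norm {I : Quaternion ℝ} (hI : I ∈ quatSphere) (a : Quaternion ℝ) {r : ℝ} (hr : 0 < r)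
    (t : ℝ) (m : ℕ) :
    ‖(sliceVal I (r * cos t, r * sin t)) ^ m * a‖ = r ^ m * ‖a‖ := by
  have := aux_inner hI a a r t m m
  rw [real_inner_self_eq_norm_sq] at this
  simp only [sub_self, Int.cast_zero, zero_mul, cos_zero, sin_zero, mul_one, mul_zero, add_zero,
    real_inner_self_eq_norm_sq] at this
  rw [← abs_of_nonneg (norm_nonneg _), ← abs_of_nonneg (a := r ^ m * ‖a‖) (by positivity),
    ← sq_eq_sq_iff_abs_eq_abs, this]
  ring

lemma aux_orth {I : Quaternion ℝ} (hI : I ∈ quatSphere) (a b : Quaternion ℝ) (r : ℝ) (m n : ℕ)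
    (h : m ≠ n) :
    ∫ t in (-π)..π, inner ℝ ((sliceVal I (r * cos t, r * sin t)) ^ m * a)
      ((sliceVal I (r * cos t, r * sin t)) ^ n * b) = 0 := by
  simp_rw [aux_inner hI]
  rw [intervalIntegral.integral_const_mul, aux_trig _ (by omega), mul_zero]

lemma aux_cont (I : Quaternion ℝ) : Continuous (sliceVal I) := by
  unfold sliceVal
  have := Quaternion.continuous_coe
  fun_prop

lemma aux_meas (f : Quaternion ℝ → Quaternion ℝ) (a : ℕ → Quaternion ℝ)
    (hf : ∀ p : Quaternion ℝ, HasSum (fun m : ℕ => p ^ m * a m) (f p)) (I : Quaternion ℝ) :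
    StronglyMeasurable (fun z => f (sliceVal I z)) := by
  have h := aux_cont I
  refine stronglyMeasurable_of_tendsto (u := Filter.atTop)
    (f := fun N : ℕ => fun z => ∑ m ∈ Finset.range N, sliceVal I z ^ m * a m) ?_ ?_
  · intro N
    apply Continuous.stronglyMeasurable
    fun_prop
  · rw [tendsto_pi_nhds]
    intro z
    exact (hf _).tendsto_sum_nat

lemma aux_parseval (f : Quaternion ℝ → Quaternion ℝ) (a : ℕ → Quaternion ℝ)
    (hf : ∀ p : Quaternion ℝ, HasSum (fun m : ℕ => p ^ m * a m) (f p))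
    {I : Quaternion ℝ} (hI : I ∈ quatSphere) {r : ℝ} (hr : 0 < r) :
    HasSum (fun m : ℕ => 2 * π * (r ^ m * ‖a m‖) ^ 2)
      (∫ t in (-π)..π, ‖f (sliceVal I (r * cos t, r * sin t))‖ ^ 2) ∧
    IntervalIntegrable (fun t => ‖f (sliceVal I (r * cos t, r * sin t))‖ ^ 2) volume (-π) π := by
  have hsum : Summable (fun m => r ^ m * ‖a m‖) := by
    have := (hf (sliceVal I (r * cos 0, r * sin 0))).summable.norm
    simpa only [aux_norm hI _ hr] using this
  set M := ∑' m, r ^ m * ‖a m‖ with hM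
  have hcs := aux_cont I
  have hfb : ∀ t, ‖f (sliceVal I (r * cos t, r * sin t))‖ ≤ M := by
    intro t
    rw [← (hf _).tsum_eq]
    refine (norm_tsum_le_tsum_norm (hf _).summable.norm).trans ?_
    simp only [aux_norm hI _ hr]
    exact le_rfl
  have hfm : StronglyMeasurable (fun t : ℝ => f (sliceVal I (r * cos t, r * sin t))) :=
    (aux_meas f a hf I).comp_measurable (by fun_prop)
  have hvc : ∀ m, Continuous (fun t : ℝ => sliceVal I (r * cos t, r * sin t) ^ m * a m) := by
    intro m; fun_prop
  have hin : ∀ m, ∫ t in (-π)..π, inner ℝ (sliceVal I (r * cos t, r * sin t) ^ m * a m)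
      (f (sliceVal I (r * cos t, r * sin t))) = 2 * π * (r ^ m * ‖a m‖) ^ 2 := by
    intro m
    have h1 : HasSum (fun n => ∫ t in (-π)..π,
        inner ℝ (sliceVal I (r * cos t, r * sin t) ^ m * a m)
          (sliceVal I (r * cos t, r * sin t) ^ n * a n))
        (∫ t in (-π)..π, inner ℝ (sliceVal I (r * cos t, r * sin t) ^ m * a m)
          (f (sliceVal I (r * cos t, r * sin t)))) := by
      refine intervalIntegral.hasSum_integral_of_dominated_convergence
        (fun n _ => (r ^ m * ‖a m‖) * (r ^ n * ‖a n‖)) ?_ ?_ ?_ ?_ ?_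
      · intro n
        exact ((hvc m).inner (hvc n)).aestronglyMeasurable
      · intro n
        refine Filter.Eventually.of_forall fun t _ => ?_
        refine (norm_inner_le_norm _ _).trans ?_
        rw [aux_norm hI _ hr, aux_norm hI _ hr]
      · exact Filter.Eventually.of_forall fun t _ => hsum.mul_left _
      · exact intervalIntegrable_const
      · refine Filter.Eventually.of_forall fun t _ => ?_
        exact (hf (sliceVal I (r * cos t, r * sin t))).mapL
          (innerSL ℝ (sliceVal I (r * cos t, r * sin t) ^ m * a m))
    have h2 := hasSum_single (f := fun n => ∫ t in (-π)..π,
        inner ℝ (sliceVal I (r * cos t, r * sin t) ^ m * a m)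
          (sliceVal I (r * cos t, r * sin t) ^ n * a n)) m
        (fun n hn => aux_orth hI _ _ _ _ _ hn.symm)
    rw [h1.unique h2]
    simp only [real_inner_self_eq_norm_sq, aux_norm hI _ hr, intervalIntegral.integral_const,
      smul_eq_mul]
    ring
  constructor
  · simp_rw [← hin]
    refine intervalIntegral.hasSum_integral_of_dominated_convergence
        (fun n _ => (r ^ n * ‖a n‖) * M) ?_ ?_ ?_ ?_ ?_
    · intro n
      exact ((hvc n).stronglyMeasurable.inner hfm).aestronglyMeasurable
    · intro n
      refine Filter.Eventually.of_forall fun t _ => ?_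
      refine (norm_inner_le_norm _ _).trans ?_
      rw [aux_norm hI _ hr]
      exact mul_le_mul_of_nonneg_left (hfb t) (by positivity)
    · exact Filter.Eventually.of_forall fun t _ => hsum.mul_right _
    · exact intervalIntegrable_const
    · refine Filter.Eventually.of_forall fun t _ => ?_
      have := (hf (sliceVal I (r * cos t, r * sin t))).mapL
          (innerSL ℝ (f (sliceVal I (r * cos t, r * sin t))))
      simp only [innerSL_apply_apply, real_inner_self_eq_norm_sq] at this
      simpa only [real_inner_comm] using this
  · refine (intervalIntegrable_const (c := M ^ 2)).mono_fun
      (hfm.norm.pow 2).aestronglyMeasurable ?_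
    refine Filter.Eventually.of_forall fun t => ?_
    simp only [norm_pow, norm_norm]
    rw [Real.norm_of_nonneg ((norm_nonneg _).trans (hfb 0))]
    exact pow_le_pow_left₀ (norm_nonneg _) (hfb t) 2

lemma aux_gamma (m : ℕ) (c : ℝ) (hc : 0 ≤ c) :
    ∫⁻ r in Set.Ioi (0 : ℝ), ENNReal.ofReal (r * exp (-r ^ 2) * (2 * π * (r ^ m * c) ^ 2))
      = ENNReal.ofReal (π * ((m ! : ℝ) * c ^ 2)) := by
  have h := integral_rpow_mul_exp_neg_rpow (p := 2) (q := 2 * m + 1) (by norm_num)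
    (by have : (0 : ℝ) ≤ m := by positivity
        linarith)
  have hg : Real.Gamma ((2 * m + 1 + 1) / 2) = (m ! : ℝ) := by
    rw [← Real.Gamma_nat_eq_factorial]; congr 1; ring
  have h1 : ∫ r in Set.Ioi (0 : ℝ), r * exp (-r ^ 2) * (2 * π * (r ^ m * c) ^ 2)
      = π * ((m ! : ℝ) * c ^ 2) := by
    rw [hg] at h
    rw [show π * ((m ! : ℝ) * c ^ 2) = (2 * π * c ^ 2) * (1 / 2 * (m ! : ℝ)) by ring, ← h,
      ← integral_const_mul]
    refine setIntegral_congr_fun measurableSet_Ioi fun r hr => ?_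
    have : r ^ (2 * (m : ℝ) + 1) = r ^ (2 * m + 1) := by
      rw [← Real.rpow_natCast]; push_cast; rfl
    simp only [this, Real.rpow_two]
    ring
  have h2 : IntegrableOn (fun r : ℝ => r * exp (-r ^ 2) * (2 * π * (r ^ m * c) ^ 2))
      (Set.Ioi (0 : ℝ)) := by
    have := (integrableOn_rpow_mul_exp_neg_rpow (p := 2) (s := 2 * m + 1)
      (by have : (0 : ℝ) ≤ m := by positivity
          linarith) (by norm_num)).const_mul (2 * π * c ^ 2)
    refine IntegrableOn.congr_fun this ?_ measurableSet_Ioi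
    intro r hr
    have : r ^ (2 * (m : ℝ) + 1) = r ^ (2 * m + 1) := by
      rw [← Real.rpow_natCast]; push_cast; rfl
    simp only [this, Real.rpow_two]
    ring
  rw [← h1, ofReal_integral_eq_lintegral_ofReal h2]
  filter_upwards [ae_restrict_mem measurableSet_Ioi] with r hr
  have : (0 : ℝ) < r := hr
  simp only [Pi.zero_apply]
  positivity

lemma aux_main (f : Quaternion ℝ → Quaternion ℝ) (a : ℕ → Quaternion ℝ)
    (hf : ∀ p : Quaternion ℝ, HasSum (fun m : ℕ => p ^ m * a m) (f p))
    {I : Quaternion ℝ} (hI : I ∈ quatSphere) :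
    fockNormSq I f = ∑' m : ℕ, ENNReal.ofReal ((m ! : ℝ) * ‖a m‖ ^ 2) := by
  have hm := aux_meas f a hf I
  have hmF : Measurable (fun z : ℝ × ℝ => ENNReal.ofReal
      (Real.exp (-(z.1 ^ 2 + z.2 ^ 2)) * ‖f (sliceVal I z)‖ ^ 2)) := by
    have := hm.norm.measurable
    fun_prop
  have hmP : Measurable (fun p : ℝ × ℝ => ENNReal.ofReal p.1 * ENNReal.ofReal
      (Real.exp (-((p.1 * cos p.2) ^ 2 + (p.1 * sin p.2) ^ 2)) *
        ‖f (sliceVal I (p.1 * cos p.2, p.1 * sin p.2))‖ ^ 2)) := by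
    have hφ : Measurable (fun p : ℝ × ℝ => (p.1 * cos p.2, p.1 * sin p.2)) := by fun_prop
    exact Measurable.mul (by fun_prop) (hmF.comp hφ)
  have key : ∫⁻ z : ℝ × ℝ, ENNReal.ofReal
      (Real.exp (-(z.1 ^ 2 + z.2 ^ 2)) * ‖f (sliceVal I z)‖ ^ 2)
      = ∑' m : ℕ, ENNReal.ofReal (π * ((m ! : ℝ) * ‖a m‖ ^ 2)) := by
    rw [← lintegral_comp_polarCoord_symm]
    simp only [polarCoord_target, polarCoord_symm_apply, smul_eq_mul]
    rw [Measure.volume_eq_prod, ← Measure.prod_restrict, lintegral_prod _ hmP.aemeasurable]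
    simp_rw [← aux_gamma _ _ (norm_nonneg _)]
    rw [← lintegral_tsum (fun m => by fun_prop)]
    refine setLIntegral_congr_fun measurableSet_Ioi fun r hr => ?_
    have hr : (0 : ℝ) < r := hr
    obtain ⟨h1, h2⟩ := aux_parseval f a hf hI hr
    have h3 := h1.mul_left (r * exp (-r ^ 2))
    rw [← ENNReal.ofReal_tsum_of_nonneg (fun n => by positivity) h3.summable, h3.tsum_eq,
      ← intervalIntegral.integral_const_mul,
      intervalIntegral.integral_of_le (by linarith [pi_pos]), integral_Ioc_eq_integral_Ioo,
      ofReal_integral_eq_lintegral_ofReal]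
    · refine lintegral_congr fun t => ?_
      rw [← ENNReal.ofReal_mul hr.le]
      congr 1
      rw [mul_pow, mul_pow, ← mul_add, cos_sq_add_sin_sq, mul_one, mul_assoc]
    · have := (h2.const_mul (r * exp (-r ^ 2)))
      rw [intervalIntegrable_iff_integrableOn_Ioo_of_le (by linarith [pi_pos])] at this
      exact this
    · refine Filter.Eventually.of_forall fun t => ?_
      simp only [Pi.zero_apply]
      positivity
  unfold fockNormSq
  rw [key, ← ENNReal.tsum_mul_left]
  congr 1
  ext m
  rw [← ENNReal.ofReal_mul (by positivity), ← mul_assoc, inv_mul_cancel₀ pi_ne_zero, one_mul]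

theorem fockNormSq_eq_tsum (f : ℍ → ℍ) (a : ℕ → ℍ)
    (hf : ∀ p : ℍ, HasSum (fun m : ℕ => p ^ m * a m) (f p))
    (I : ℍ) (hI : I ∈ quatSphere) :
    fockNormSq I f = ∑' m : ℕ, ENNReal.ofReal ((m ! : ℝ) * ‖a m‖ ^ 2) ∧
      (fockNormSq I f < ⊤ ↔ Summable fun m : ℕ => (m ! : ℝ) * ‖a m‖ ^ 2) := by
  rw [aux_main f a hf hI]
  refine ⟨rfl, ?_⟩
  constructor
  · intro h
    have := ENNReal.summable_toReal h.ne
    refine this.congr fun m => ?_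
    rw [ENNReal.toReal_ofReal (by positivity)]
  · intro h
    exact h.tsum_ofReal_lt_top
end
end

section
/- The ⋆-exponential satisfies the Representation Formula: for all x, y ∈ ℝ, all imaginary units I, J ∈ 𝕊, and all w ∈ ℍ, Σ_{n=0}^∞ (x+yJ)ⁿ wⁿ / n! = (1/2)[ Σ_{n=0}^∞ (x+yI)ⁿ wⁿ/n! + Σ_{n=0}^∞ (x−yI)ⁿ wⁿ/n! ] + J · (1/2) [ I ( Σ_{n=0}^∞ (x−yI)ⁿ wⁿ/n! − Σ_{n=0}^∞ (x+yI)ⁿ wⁿ/n! ) ]. In particular, e_⋆^{qw} is the unique slice regular extension to ℍ of the function z ↦ Σ_{n=0}^∞ zⁿ wⁿ/n! defined on a complex plane ℂ_I. -/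
open MeasureTheory Real Nat

noncomputable section

local notation "ℍ" => Quaternion ℝ

/-- The ⋆-exponential `e_⋆^{pw} = Σ pⁿ wⁿ / n!`. -/
def starExp (p w : ℍ) : ℍ := ∑' n : ℕ, ((n ! : ℝ)⁻¹) • (p ^ n * w ^ n)

theorem quatSphere_mul_self {K : ℍ} (hK : K ∈ quatSphere) : K * K = -1 := by
  obtain ⟨h0, h1⟩ := hK
  have h2 : K.re ^ 2 + K.imI ^ 2 + K.imJ ^ 2 + K.imK ^ 2 = 1 := by
    rw [← Quaternion.normSq_def', Quaternion.normSq_eq_norm_mul_self, h1]; norm_num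
  rw [h0] at h2
  rw [← Quaternion.coe_one, ← Quaternion.coe_neg]
  ext <;> simp [h0, -Quaternion.coe_one, -Quaternion.coe_neg] <;> nlinarith

theorem slice_pow (x y : ℝ) (n : ℕ) : ∃ a b : ℝ, ∀ K : ℍ, K * K = -1 →
    ((x : ℍ) + (y : ℍ) * K) ^ n = a • (1 : ℍ) + b • K := by
  induction n with
  | zero => exact ⟨1, 0, fun K _ => by simp⟩
  | succ n ih =>
    obtain ⟨a, b, h⟩ := ih
    refine ⟨a * x - b * y, a * y + b * x, fun K hK => ?_⟩
    have e : (x : ℍ) + (y : ℍ) * K = x • (1 : ℍ) + y • K := by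
      rw [← Quaternion.coe_one]
      ext <;> simp [-Quaternion.coe_one]
    rw [pow_succ, h K hK, e]
    simp only [add_mul, mul_add, smul_mul_smul_comm, one_mul, mul_one, hK]
    module

theorem summable_starExp (p w : ℍ) :
    Summable (fun n : ℕ => ((n ! : ℝ)⁻¹) • (p ^ n * w ^ n)) := by
  refine Summable.of_norm_bounded (Real.summable_pow_div_factorial (‖p‖ * ‖w‖)) fun n => ?_
  rw [norm_smul, norm_mul, norm_pow, norm_pow, mul_pow, norm_inv, Real.norm_natCast, div_eq_inv_mul]

theorem starExp_representation_formula (x y : ℝ) (I J : ℍ)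
    (hI : I ∈ quatSphere) (hJ : J ∈ quatSphere) (w : ℍ) :
    starExp ((x : ℍ) + (y : ℍ) * J) w =
      (2 : ℝ)⁻¹ • (starExp ((x : ℍ) + (y : ℍ) * I) w + starExp ((x : ℍ) - (y : ℍ) * I) w) +
        J * ((2 : ℝ)⁻¹ •
          (I * (starExp ((x : ℍ) - (y : ℍ) * I) w - starExp ((x : ℍ) + (y : ℍ) * I) w))) := by
  have hI' := quatSphere_mul_self hI
  have hJ' := quatSphere_mul_self hJ
  have hp := (summable_starExp ((x : ℍ) + (y : ℍ) * I) w).hasSum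
  have hm := (summable_starExp ((x : ℍ) - (y : ℍ) * I) w).hasSum
  have key := ((hp.add hm).const_smul (2 : ℝ)⁻¹).add
    ((((hm.sub hp).mul_left I).const_smul (2 : ℝ)⁻¹).mul_left J)
  refine Eq.trans ?_ key.tsum_eq
  unfold starExp
  refine tsum_congr fun n => ?_
  obtain ⟨a, b, h⟩ := slice_pow x y n
  have hneg : (x : ℍ) - (y : ℍ) * I = (x : ℍ) + (y : ℍ) * (-I) := by
    rw [mul_neg, sub_eq_add_neg]
  rw [hneg, h J hJ', h I hI', h (-I) (by rw [neg_mul_neg, hI'])]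
  have hIw : ∀ v : ℍ, I * (I * v) = -v := fun v => by rw [← mul_assoc, hI', neg_one_mul]
  simp only [add_mul, smul_add, mul_add, mul_sub, smul_sub, smul_mul_assoc, mul_smul_comm, one_mul,
    neg_mul, mul_neg, smul_neg, hIw]
  module
end
end

section
/- Representation Formula: let U ⊆ ℍ be an axially symmetric slice domain and let f : U → ℍ be left slice regular on U. Then for every J ∈ 𝕊 and every q = x + Iy ∈ U (with I ∈ 𝕊, x, y ∈ ℝ), the equality f(x+Iy) = (1/2)[ f(x+Jy) + f(x−Jy) ] + I·(1/2)[ J ( f(x−Jy) − f(x+Jy) ) ] holds. -/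
open MeasureTheory Real Nat

noncomputable section

local notation "ℍ" => Quaternion ℝ

/-- `U` is axially symmetric: it contains the whole sphere `[x + Iy]` of each of its points. -/
def AxiallySymmetric (U : Set ℍ) : Prop :=
  ∀ (x y : ℝ), ∀ I ∈ quatSphere, sliceVal I (x, y) ∈ U → ∀ J ∈ quatSphere, sliceVal J (x, y) ∈ U

/-- `U` is a slice domain: a domain intersecting the real axis, whose slices are domains. -/
def SliceDomain (U : Set ℍ) : Prop :=
  IsOpen U ∧ IsConnected U ∧ (∃ r : ℝ, (r : ℍ) ∈ U) ∧
    ∀ I ∈ quatSphere, IsConnected {z : ℝ × ℝ | sliceVal I z ∈ U}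

/-- `f` is left slice regular on `U`: on each slice it is real differentiable and satisfies the
Cauchy–Riemann equation `(∂/∂x + I ∂/∂y) f_I = 0`. -/
def SliceRegularOn (f : ℍ → ℍ) (U : Set ℍ) : Prop :=
  ∀ I ∈ quatSphere, ∀ z : ℝ × ℝ, sliceVal I z ∈ U →
    DifferentiableAt ℝ (fun w : ℝ × ℝ => f (sliceVal I w)) z ∧
      fderiv ℝ (fun w : ℝ × ℝ => f (sliceVal I w)) z (1, 0) +
        I * fderiv ℝ (fun w : ℝ × ℝ => f (sliceVal I w)) z (0, 1) = 0

theorem sphere_sq (I : ℍ) (hI : I ∈ quatSphere) : I * I = -1 := by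
  obtain ⟨h1, h2⟩ := hI
  have h3 : star I = -I := by
    ext <;> simp [h1]
  have h4 : I * star I = ((Quaternion.normSq I : ℝ) : ℍ) := Quaternion.self_mul_star I
  rw [Quaternion.normSq_eq_norm_mul_self, h2, h3] at h4
  have h5 : -(I * I) = 1 := by simpa using h4
  rw [← h5, neg_neg]

theorem sphere_neg (I : ℍ) (hI : I ∈ quatSphere) : -I ∈ quatSphere := by
  obtain ⟨h1, h2⟩ := hI
  exact ⟨by simp [h1], by simpa using h2⟩

/-- Scalar identity principle. -/
theorem slice_identity (I : ℍ) (hI2 : I * I = -1) (V : Set (ℝ × ℝ)) (hVo : IsOpen V)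
    (hVc : IsPreconnected V) (r : ℝ) (hr : (r, 0) ∈ V) (g : ℝ × ℝ → ℍ)
    (hg : ∀ z ∈ V, DifferentiableAt ℝ g z ∧ fderiv ℝ g z (1, 0) + I * fderiv ℝ g z (0, 1) = 0)
    (h0 : ∀ t : ℝ, g (t, 0) = 0) (l : ℍ →L[ℝ] ℝ) (z : ℝ × ℝ) (hz : z ∈ V) : l (g z) = 0 := by
  let e : ℂ →L[ℝ] ℝ × ℝ := Complex.reCLM.prod Complex.imCLM
  let P : ℍ →L[ℝ] ℂ := Complex.ofRealCLM.comp l -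
    Complex.I • Complex.ofRealCLM.comp (l.comp (ContinuousLinearMap.mul ℝ ℍ I))
  have hP : ∀ q, P q = (l q : ℂ) - Complex.I * (l (I * q) : ℂ) := by
    intro q; simp [P]
  have hPI : ∀ q, P (I * q) = Complex.I * P q := by
    intro q
    rw [hP, hP, ← mul_assoc, hI2, mul_sub, ← mul_assoc, Complex.I_mul_I]
    simp
    ring
  let W : Set ℂ := e ⁻¹' V
  have hWo : IsOpen W := hVo.preimage e.continuous
  have hWc : IsPreconnected W := by
    have : W = Complex.equivRealProdCLM.toHomeomorph ⁻¹' V := by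
      ext w; rfl
    rw [this, Homeomorph.isPreconnected_preimage]
    exact hVc
  let h : ℂ → ℂ := fun w => P (g (e w))
  have hd : DifferentiableOn ℂ h W := by
    intro w hw
    apply DifferentiableAt.differentiableWithinAt
    obtain ⟨h1, h2⟩ := hg (e w) hw
    have hF : HasFDerivAt h (P.comp ((fderiv ℝ g (e w)).comp e)) w :=
      P.hasFDerivAt.comp w (h1.hasFDerivAt.comp w e.hasFDerivAt)
    rw [differentiableAt_complex_iff_differentiableAt_real]
    refine ⟨hF.differentiableAt, ?_⟩
    rw [hF.fderiv]
    have e1 : e 1 = (1, 0) := by simp [e]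
    have eI : e Complex.I = (0, 1) := by simp [e]
    simp only [ContinuousLinearMap.comp_apply, e1, eI, smul_eq_mul]
    rw [eq_neg_of_add_eq_zero_left h2, map_neg, hPI, mul_neg, ← mul_assoc, Complex.I_mul_I]
    simp
  have ha : AnalyticOnNhd ℂ h W := hd.analyticOnNhd hWo
  have hrW : (r : ℂ) ∈ W := by
    change e r ∈ V
    have : e (r : ℂ) = (r, 0) := by simp [e]
    rwa [this]
  have hfreq : ∃ᶠ w in nhdsWithin (r : ℂ) {(r : ℂ)}ᶜ, h w = 0 := by
    have ht : Filter.Tendsto (fun t : ℝ => (t : ℂ)) (nhdsWithin r {r}ᶜ)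
        (nhdsWithin (r : ℂ) {(r : ℂ)}ᶜ) := by
      apply tendsto_nhdsWithin_of_tendsto_nhds_of_eventually_within
      · exact (Complex.continuous_ofReal.tendsto r).mono_left nhdsWithin_le_nhds
      · filter_upwards [self_mem_nhdsWithin] with t ht
        simpa using ht
    apply ht.frequently
    apply Filter.Eventually.frequently
    apply Filter.Eventually.of_forall
    intro t
    have : e (t : ℂ) = (t, 0) := by simp [e]
    simp only [h, this, h0, map_zero]
  have hz0 := ha.eqOn_zero_of_preconnected_of_frequently_eq_zero hWc hrW hfreq
  have hzW : (⟨z.1, z.2⟩ : ℂ) ∈ W := hz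
  have h3 : P (g z) = 0 := hz0 hzW
  rw [hP] at h3
  have := congrArg Complex.re h3
  simpa using this

theorem representation_formula (U : Set ℍ) (hU : SliceDomain U) (hUax : AxiallySymmetric U)
    (f : ℍ → ℍ) (hf : SliceRegularOn f U) (J : ℍ) (hJ : J ∈ quatSphere)
    (I : ℍ) (hI : I ∈ quatSphere) (x y : ℝ) (hq : (x : ℍ) + (y : ℍ) * I ∈ U) :
    f ((x : ℍ) + (y : ℍ) * I) =
      (2 : ℝ)⁻¹ • (f ((x : ℍ) + (y : ℍ) * J) + f ((x : ℍ) - (y : ℍ) * J)) +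
        I * ((2 : ℝ)⁻¹ •
          (J * (f ((x : ℍ) - (y : ℍ) * J) - f ((x : ℍ) + (y : ℍ) * J)))) := by
  have hI2 := sphere_sq I hI
  have hJ2 := sphere_sq J hJ
  have hJn := sphere_neg J hJ
  obtain ⟨hUo, -, ⟨r, hr⟩, hUs⟩ := hU
  let V : Set (ℝ × ℝ) := {z | sliceVal I z ∈ U}
  have hcont : Continuous (sliceVal I) := by
    unfold sliceVal
    have := Quaternion.continuous_coe
    fun_prop
  let A : ℍ := (2 : ℝ)⁻¹ • (1 - I * J)
  let B : ℍ := (2 : ℝ)⁻¹ • (1 + I * J)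
  let F : ℍ → ℝ × ℝ → ℍ := fun K w => f (sliceVal K w)
  let g : ℝ × ℝ → ℍ := fun w => F I w - A * F J w - B * F (-J) w
  have hAB : A + B = 1 := by
    simp only [A, B]
    rw [← smul_add, show (1 - I * J) + (1 + I * J) = (2 : ℝ) • (1 : ℍ) by rw [two_smul]; abel,
      smul_smul]
    norm_num
  have hA : A * J = I * A := by
    simp only [A, smul_mul_assoc, mul_smul_comm]
    rw [sub_mul, mul_sub, mul_assoc, hJ2, ← mul_assoc, hI2]
    simp [add_comm]
  have hB : B * J = - (I * B) := by
    simp only [B, smul_mul_assoc, mul_smul_comm]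
    rw [add_mul, mul_add, mul_assoc, hJ2, ← mul_assoc, hI2, ← smul_neg]
    simp [add_comm]
  have key : ∀ l : ℍ →L[ℝ] ℝ, l (g (x, y)) = 0 := by
    intro l
    refine slice_identity I hI2 V (hUo.preimage hcont) (hUs I hI).isPreconnected r ?_ g ?_ ?_ l
      (x, y) hq
    · change sliceVal I (r, 0) ∈ U
      simpa [sliceVal] using hr
    · rintro ⟨a, b⟩ hz
      obtain ⟨d1, c1⟩ := hf I hI (a, b) hz
      obtain ⟨d2, c2⟩ := hf J hJ (a, b) (hUax a b I hI hz J hJ)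
      obtain ⟨d3, c3⟩ := hf (-J) hJn (a, b) (hUax a b I hI hz (-J) hJn)
      have hF : HasFDerivAt g (fderiv ℝ (F I) (a, b)
          - (ContinuousLinearMap.mul ℝ ℍ A).comp (fderiv ℝ (F J) (a, b))
          - (ContinuousLinearMap.mul ℝ ℍ B).comp (fderiv ℝ (F (-J)) (a, b))) (a, b) :=
        (d1.hasFDerivAt.sub
          ((ContinuousLinearMap.mul ℝ ℍ A).hasFDerivAt.comp (a, b) d2.hasFDerivAt)).sub
          ((ContinuousLinearMap.mul ℝ ℍ B).hasFDerivAt.comp (a, b) d3.hasFDerivAt)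
      refine ⟨hF.differentiableAt, ?_⟩
      rw [hF.fderiv]
      simp only [ContinuousLinearMap.sub_apply, ContinuousLinearMap.comp_apply,
        ContinuousLinearMap.mul_apply']
      have c1' := eq_neg_of_add_eq_zero_left c1
      have c2' := eq_neg_of_add_eq_zero_left c2
      have c3' := eq_neg_of_add_eq_zero_left c3
      simp only [F]
      rw [c1', c2', c3', neg_mul, neg_neg, mul_neg, ← mul_assoc A, ← mul_assoc B, hA, hB]
      noncomm_ring
    · intro t
      have : ∀ K : ℍ, F K (t, 0) = f t := by
        intro K; simp [F, sliceVal]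
      simp only [g, this]
      rw [sub_sub, ← add_mul, hAB, one_mul, sub_self]
  have hg0 : g (x, y) = 0 := by
    by_contra hne
    obtain ⟨l, -, hl⟩ := exists_dual_vector ℝ (g (x, y)) (norm_ne_zero_iff.mpr hne)
    rw [key l] at hl
    exact hne (norm_eq_zero.mp (by simpa using hl.symm))
  have e1 : F (-J) (x, y) = f ((x : ℍ) - (y : ℍ) * J) := by
    simp [F, sliceVal, sub_eq_add_neg]
  have e2 : F J (x, y) = f ((x : ℍ) + (y : ℍ) * J) := rfl
  have e3 : F I (x, y) = f ((x : ℍ) + (y : ℍ) * I) := rfl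
  simp only [g, e1, e2, e3] at hg0
  rw [sub_sub, sub_eq_zero] at hg0
  rw [hg0]
  simp only [A, B, smul_mul_assoc, mul_smul_comm, ← smul_add]
  congr 1
  noncomm_ring
end
end
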